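/- Let K ⊆ ℝⁿ be a compact, convex, symmetric (K = −K) set with positive Lebesgue volume, and let ξ be uniformly distributed on K, so that f(x) := Vol({ξ ∈ K : |⟨ξ, x⟩| ≤ 1}) / Vol(K). Then f(x) > 0 for every x ∈ ℝⁿ and the function h(x) := 1/f(x) is convex on ℝⁿ. -/

import Mathlib

open MeasureTheory Filter
open scoped InnerProductSpace

/-!
Let `F(φ)` be the mass of the slab `{|φ| ≤ 1}`; the point is that
`F(aφ + bψ)⁻¹ ≤ a F(φ)⁻¹ + b F(ψ)⁻¹` for weights `a + b = 1`. By symmetry it is enough to look at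
the half-space `{0 < l}` with `l = φ - ψ`. If `c + d = 1` and `c b l(p) = d a l(q)`, then
`(aφ + bψ)(cp + dq) = c φ(p) + d ψ(q)`, so `cp + dq` lies in the slab of `aφ + bψ` as soon as `p`
and `q` lie in the slabs of `φ` and `ψ`. Here the weights `c, d` depend on `p, q`, but the
projective involution `(t, w) ↦ (1 / t, w / t)` of the half-space, `t` being the value of `l`, turns
them into the fixed weights `a, b`. In dimension `n` its Jacobian `t⁻⁽ⁿ⁺¹⁾` has a `-1/(n+1)`-th
power linear in `t`, so it preserves concavity of order `-1/(n+1)`, and the Borell–Brascamp–Lieb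
inequality then bounds the integrals by their mean of order `-1`.
-/

section SlabMass

open scoped ENNReal NNReal Pointwise Topology

variable {a b : ℝ}

section BorellBrascampLieb

theorem volume_add_volume_le_volume_add_of_isCompact {A B : Set ℝ} (hA : IsCompact A)
    (hB : IsCompact B) (hA₀ : A.Nonempty) (hB₀ : B.Nonempty) :
    volume A + volume B ≤ volume (A + B) := by
  obtain ⟨α, hαA, hα⟩ := hA.exists_isGreatest hA₀
  obtain ⟨β, hβB, hβ⟩ := hB.exists_isLeast hB₀
  -- The translates `A + min B` and `max A + B` lie in `A + B` and meet only at `max A + min B`.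
  have inter_subset : (β +ᵥ A) ∩ (α +ᵥ B) ⊆ {α + β} := by
    rintro _ ⟨⟨x, hx, rfl⟩, y, hy, hxy⟩
    have hxα := hα hx
    have hβy := hβ hy
    simp only [vadd_eq_add, Set.mem_singleton_iff] at hxy ⊢
    linarith
  have union_subset : (β +ᵥ A) ∪ (α +ᵥ B) ⊆ A + B := by
    rintro _ (⟨x, hx, rfl⟩ | ⟨y, hy, rfl⟩)
    · exact ⟨x, hx, β, hβB, add_comm x β⟩
    · exact ⟨α, hαA, y, hy, rfl⟩
  calc volume A + volume B = volume (β +ᵥ A) + volume (α +ᵥ B) := by simp only [measure_vadd]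
    _ = volume ((β +ᵥ A) ∪ (α +ᵥ B)) := by
      rw [← measure_union_add_inter _ (hB.vadd α).measurableSet,
        measure_mono_null inter_subset (measure_singleton _), add_zero]
    _ ≤ volume (A + B) := measure_mono union_subset

theorem volume_add_volume_le_volume_add {A B : Set ℝ} (hA : MeasurableSet A)
    (hB : MeasurableSet B) (hA₀ : A.Nonempty) (hB₀ : B.Nonempty) :
    volume A + volume B ≤ volume (A + B) := by
  obtain ⟨x, hx⟩ := hA₀
  obtain ⟨y, hy⟩ := hB₀
  rw [hA.measure_eq_iSup_isCompact, hB.measure_eq_iSup_isCompact]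
  simp only [iSup_and']
  refine ENNReal.biSup_add_biSup_le' ⟨∅, by simp⟩ ⟨∅, by simp⟩ ?_
  rintro K ⟨hKA, hK⟩ L ⟨hLB, hL⟩
  calc volume K + volume L ≤ volume (insert x K) + volume (insert y L) := by
        gcongr <;> exact Set.subset_insert _ _
    _ ≤ volume (insert x K + insert y L) :=
      volume_add_volume_le_volume_add_of_isCompact (hK.insert x) (hL.insert y)
        (Set.insert_nonempty _ _) (Set.insert_nonempty _ _)
    _ ≤ volume (A + B) := measure_mono <|
      Set.add_subset_add (Set.insert_subset hx hKA) (Set.insert_subset hy hLB)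

theorem lintegral_eq_lintegral_measure_ofReal_lt {α : Type*} [MeasurableSpace α] {μ : Measure α}
    {f : α → ℝ≥0∞} (hf : AEMeasurable f μ) (hf_top : ∀ x, f x ≠ ∞) :
    ∫⁻ x, f x ∂μ = ∫⁻ t in Set.Ioi (0 : ℝ), μ {x | ENNReal.ofReal t < f x} := by
  have layercake := lintegral_eq_lintegral_meas_lt μ (f := fun x => (f x).toReal)
    (Eventually.of_forall fun _ => ENNReal.toReal_nonneg) hf.ennreal_toReal
  simp only [ENNReal.ofReal_toReal (hf_top _)] at layercake
  rw [layercake]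
  refine setLIntegral_congr_fun measurableSet_Ioi fun t ht => ?_
  simp only [ENNReal.ofReal_lt_iff_lt_toReal (le_of_lt ht) (hf_top _)]

theorem lintegral_add_lintegral_le_of_min_le_of_ne_top (ha : 0 < a) (hb : 0 < b)
    {f g h : ℝ → ℝ≥0∞} (hf : Measurable f) (hg : Measurable g) (hh : Measurable h)
    (hfg : ⨆ x, f x = ⨆ x, g x) (hf_top : ⨆ x, f x ≠ ∞) (hh_top : ∀ x, h x ≠ ∞)
    (H : ∀ x y, min (f x) (g y) ≤ h (a * x + b * y)) :
    ENNReal.ofReal a * (∫⁻ x, f x) + ENNReal.ofReal b * ∫⁻ x, g x ≤ ∫⁻ x, h x := by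
  have measurable_level (u : ℝ → ℝ≥0∞) :
      Measurable fun t : ℝ => volume {x | ENNReal.ofReal t < u x} :=
    Antitone.measurable fun t t' htt' => measure_mono fun x hx =>
      (ENNReal.ofReal_le_ofReal htt').trans_lt hx
  have ofReal_mul_volume (c : ℝ) (hc : 0 < c) (A : Set ℝ) :
      ENNReal.ofReal c * volume A = volume (c • A) := by
    simp [Measure.addHaar_smul, abs_of_pos hc]
  rw [lintegral_eq_lintegral_measure_ofReal_lt hf.aemeasurable
      fun x => ne_top_of_le_ne_top hf_top (le_iSup f x),
    lintegral_eq_lintegral_measure_ofReal_lt hg.aemeasurable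
      fun x => ne_top_of_le_ne_top (hfg ▸ hf_top) (le_iSup g x),
    lintegral_eq_lintegral_measure_ofReal_lt hh.aemeasurable hh_top,
    ← lintegral_const_mul _ (measurable_level f), ← lintegral_const_mul _ (measurable_level g),
    ← lintegral_add_left ((measurable_level f).const_mul _)]
  refine lintegral_mono fun t => ?_
  simp only [ofReal_mul_volume a ha, ofReal_mul_volume b hb]
  by_cases ht : ENNReal.ofReal t < ⨆ x, f x
  · refine (volume_add_volume_le_volume_add
      ((measurableSet_lt measurable_const hf).const_smul₀ a)
      ((measurableSet_lt measurable_const hg).const_smul₀ b)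
      (Set.Nonempty.smul_set (lt_iSup_iff.1 ht))
      (Set.Nonempty.smul_set (lt_iSup_iff.1 (ht.trans_eq hfg)))).trans (measure_mono ?_)
    rintro _ ⟨_, ⟨x, hx, rfl⟩, _, ⟨y, hy, rfl⟩, rfl⟩
    exact (lt_min hx hy).trans_le (H x y)
  · have hf_empty : {x | ENNReal.ofReal t < f x} = ∅ :=
      Set.eq_empty_of_forall_notMem fun x hx => ht (lt_iSup_iff.2 ⟨x, hx⟩)
    have hg_empty : {x | ENNReal.ofReal t < g x} = ∅ :=
      Set.eq_empty_of_forall_notMem fun x hx => ht (hfg ▸ lt_iSup_iff.2 ⟨x, hx⟩)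
    simp [hf_empty, hg_empty]

theorem lintegral_add_lintegral_le_of_min_le (ha : 0 < a) (hb : 0 < b)
    {f g h : ℝ → ℝ≥0∞} (hf : Measurable f) (hg : Measurable g) (hh : Measurable h)
    (hfg : ⨆ x, f x = ⨆ x, g x) (hf_top : ⨆ x, f x ≠ ∞)
    (H : ∀ x y, min (f x) (g y) ≤ h (a * x + b * y)) :
    ENNReal.ofReal a * (∫⁻ x, f x) + ENNReal.ofReal b * ∫⁻ x, g x ≤ ∫⁻ x, h x :=
  calc ENNReal.ofReal a * (∫⁻ x, f x) + ENNReal.ofReal b * ∫⁻ x, g x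
      ≤ ∫⁻ z, min (h z) (⨆ x, f x) :=
        lintegral_add_lintegral_le_of_min_le_of_ne_top ha hb hf hg (hh.min measurable_const) hfg
          hf_top (fun _ => ne_top_of_le_ne_top hf_top (min_le_right _ _))
          fun x y => le_min (H x y) ((min_le_left _ _).trans (le_iSup f x))
    _ ≤ ∫⁻ x, h x := lintegral_mono fun _ => min_le_left _ _

theorem ennreal_rpow_neg_le_rpow_neg_iff {x y : ℝ≥0∞} {s : ℝ} (hs : 0 < s) :
    x ^ (-s) ≤ y ^ (-s) ↔ y ≤ x := by
  rw [ENNReal.rpow_neg, ENNReal.rpow_neg, ENNReal.inv_le_inv, ENNReal.rpow_le_rpow_iff hs]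

theorem ennreal_le_rpow_neg_mean_of_ne_zero {s : ℝ} (hs : 0 < s) (ha : 0 < a) (hb : 0 < b)
    {u v w : ℝ≥0∞} (h : u ≠ 0 → v ≠ 0 →
      w ≤ ENNReal.ofReal a * u ^ (-s) + ENNReal.ofReal b * v ^ (-s)) :
    w ≤ ENNReal.ofReal a * u ^ (-s) + ENNReal.ofReal b * v ^ (-s) := by
  have zero_rpow : (0 : ℝ≥0∞) ^ (-s) = ∞ := ENNReal.zero_rpow_of_neg (neg_lt_zero.2 hs)
  rcases eq_or_ne u 0 with rfl | hu
  · simp [zero_rpow, ENNReal.mul_top, ha]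
  rcases eq_or_ne v 0 with rfl | hv
  · simp [zero_rpow, ENNReal.mul_top, hb]
  exact h hu hv

theorem ennreal_add_mul_rpow_le_rpow_mul_rpow (a b x₁ x₂ y₁ y₂ : ℝ≥0∞) {p q : ℝ} (hp : 0 ≤ p)
    (hq : 0 ≤ q) (hpq : p + q = 1) :
    a * (x₁ ^ p * y₁ ^ q) + b * (x₂ ^ p * y₂ ^ q) ≤
      (a * x₁ + b * x₂) ^ p * (a * y₁ + b * y₂) ^ q := by
  -- Hölder's inequality for the measure with atoms of mass `a` and `b`.
  have holder := ENNReal.lintegral_mul_norm_pow_le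
    (μ := a • Measure.dirac true + b • Measure.dirac false)
    (f := fun i => cond i x₁ x₂) (g := fun i => cond i y₁ y₂)
    (measurable_of_countable _).aemeasurable (measurable_of_countable _).aemeasurable hp hq hpq
  simpa [lintegral_add_measure, lintegral_smul_measure] using holder

theorem ennreal_rpow_neg_mean_le (a b : ℝ≥0∞) {m : ℝ} (hm : 0 < m) {A B F G : ℝ≥0∞}
    (hA : A ≠ 0) (hB : B ≠ 0)
    (hF : F ≠ 0) (hF_top : F ≠ ∞) (hG : G ≠ 0) (hG_top : G ≠ ∞) :
    (a * A ^ (-(m + 1)⁻¹) + b * B ^ (-(m + 1)⁻¹)) ^ (m + 1) ≤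
      (a * F ^ (-m⁻¹) + b * G ^ (-m⁻¹)) ^ m * (a * (F / A) + b * (G / B)) := by
  have split {A F : ℝ≥0∞} (hA : A ≠ 0) (hF : F ≠ 0) (hF_top : F ≠ ∞) :
      A ^ (-(m + 1)⁻¹) = (F ^ (-m⁻¹)) ^ (m / (m + 1)) * (F / A) ^ (m + 1)⁻¹ := by
    have hexp : -m⁻¹ * (m / (m + 1)) = -(m + 1)⁻¹ := by field_simp
    rw [← ENNReal.rpow_mul, hexp, div_eq_mul_inv F A,
      ENNReal.mul_rpow_of_ne_top hF_top (ENNReal.inv_ne_top.2 hA), ← mul_assoc,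
      ← ENNReal.rpow_add _ _ hF hF_top, neg_add_cancel, ENNReal.rpow_zero, one_mul,
      ENNReal.inv_rpow, ENNReal.rpow_neg]
  rw [split hA hF hF_top, split hB hG hG_top]
  have holder := ennreal_add_mul_rpow_le_rpow_mul_rpow a b (F ^ (-m⁻¹)) (G ^ (-m⁻¹)) (F / A)
    (G / B) (p := m / (m + 1)) (q := (m + 1)⁻¹) (by positivity) (by positivity) (by field_simp)
  refine (ENNReal.rpow_le_rpow holder (by positivity : 0 ≤ m + 1)).trans_eq ?_
  rw [ENNReal.mul_rpow_of_nonneg _ _ (by positivity), ← ENNReal.rpow_mul, ← ENNReal.rpow_mul,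
    div_mul_cancel₀ _ (by positivity), inv_mul_cancel₀ (by positivity), ENNReal.rpow_one]

theorem ennreal_rpow_neg_le_of_div_add_le {a b A B F G I : ℝ≥0∞} {m : ℝ} (hm : 0 < m)
    (ha : a ≠ 0) (ha_top : a ≠ ∞) (hb : b ≠ 0) (hb_top : b ≠ ∞)
    (hA : A ≠ 0) (hA_top : A ≠ ∞) (hB : B ≠ 0) (hB_top : B ≠ ∞) (hF : F ≠ 0) (hG : G ≠ 0)
    (hI : a * (F / A) + b * (G / B) ≤
      I * (a * A ^ (-(m + 1)⁻¹) + b * B ^ (-(m + 1)⁻¹)) ^ (m + 1)) :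
    I ^ (-m⁻¹) ≤ a * F ^ (-m⁻¹) + b * G ^ (-m⁻¹) := by
  set C := a * (F / A) + b * (G / B) with hC
  set U := a * F ^ (-m⁻¹) + b * G ^ (-m⁻¹)
  rcases eq_or_ne I ∞ with hI_top | hI_top
  · simp [hI_top, ENNReal.top_rpow_of_neg (by simpa using hm : -m⁻¹ < 0)]
  have hC₀ : C ≠ 0 := by simp [hC, ha, hF, hA_top]
  have hC_top : C ≠ ∞ := by
    refine ne_top_of_le_ne_top (ENNReal.mul_ne_top hI_top ?_) hI
    simp [ENNReal.rpow_eq_top_iff, ENNReal.mul_eq_top, ha, ha_top, hb_top, hA, hA_top, hB, hB_top]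
  have hF_top : F ≠ ∞ := by
    rintro rfl
    simp [hC, ENNReal.top_div_of_ne_top hA_top, ENNReal.mul_top ha] at hC_top
  have hG_top : G ≠ ∞ := by
    rintro rfl
    simp [hC, ENNReal.top_div_of_ne_top hB_top, ENNReal.mul_top hb] at hC_top
  have one_le : 1 ≤ I * U ^ m := by
    rw [← ENNReal.mul_le_mul_iff_left hC₀ hC_top, one_mul, mul_assoc]
    refine hI.trans ?_
    gcongr
    exact ennreal_rpow_neg_mean_le a b hm hA hB hF hF_top hG hG_top
  rw [ENNReal.rpow_neg, ← ENNReal.inv_rpow, ENNReal.rpow_inv_le_iff hm, ← one_div]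
  exact ENNReal.div_le_of_le_mul' one_le

/-- `h (a • x + b • y)` is at least the power mean `(a f(x)⁻ˢ + b g(y)⁻ˢ)^(-1/s)` of order `-s`:
the hypothesis of the Borell–Brascamp–Lieb inequality. Raising to the power `-s` reverses the
inequality, and the conventions `0⁻ˢ = ∞`, `∞⁻ˢ = 0` of `ℝ≥0∞` make it void where `f` or `g`
vanishes (for `a, b > 0`). -/
def NegPowerMeanLE {E : Type*} [AddCommGroup E] [Module ℝ E] (s a b : ℝ) (f g h : E → ℝ≥0∞) :
    Prop :=
  ∀ x y, h (a • x + b • y) ^ (-s) ≤ ENNReal.ofReal a * f x ^ (-s) + ENNReal.ofReal b * g y ^ (-s)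

theorem NegPowerMeanLE.anti {E : Type*} [AddCommGroup E] [Module ℝ E] {s : ℝ} (hs : 0 < s)
    {f f' g g' h : E → ℝ≥0∞} (H : NegPowerMeanLE s a b f g h) (hf : f' ≤ f) (hg : g' ≤ g) :
    NegPowerMeanLE s a b f' g' h := fun x y => (H x y).trans <| by
  gcongr ENNReal.ofReal a * ?_ + ENNReal.ofReal b * ?_
  · exact (ennreal_rpow_neg_le_rpow_neg_iff hs).2 (hf x)
  · exact (ennreal_rpow_neg_le_rpow_neg_iff hs).2 (hg y)

theorem NegPowerMeanLE.min_div_le {E : Type*} [AddCommGroup E] [Module ℝ E] {s : ℝ} (hs : 0 < s)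
    (ha : 0 < a) {f g h : E → ℝ≥0∞} (H : NegPowerMeanLE s a b f g h) {A B : ℝ≥0∞}
    (hA : A ≠ 0) (hA' : A ≠ ∞) (hB : B ≠ 0) (hB' : B ≠ ∞) (x y : E) :
    min (f x / A) (g y / B) ≤ h (a • x + b • y) *
      (ENNReal.ofReal a * A ^ (-s) + ENNReal.ofReal b * B ^ (-s)) ^ s⁻¹ := by
  set τ := min (f x / A) (g y / B)
  set X := ENNReal.ofReal a * A ^ (-s) + ENNReal.ofReal b * B ^ (-s)
  rcases eq_or_ne τ 0 with hτ | hτ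
  · simp [hτ]
  have hX : X ≠ 0 := by
    simp [X, ha, ENNReal.rpow_eq_zero_iff, hA, hA', hs, hs.le]
  have hX' : X ≠ ∞ := by
    simp [X, ENNReal.mul_eq_top, ENNReal.rpow_eq_top_iff, hA, hA', hB, hB']
  have scaled : h (a • x + b • y) ^ (-s) ≤ τ ^ (-s) * X :=
    calc h (a • x + b • y) ^ (-s)
        ≤ ENNReal.ofReal a * f x ^ (-s) + ENNReal.ofReal b * g y ^ (-s) := H x y
      _ ≤ ENNReal.ofReal a * (τ * A) ^ (-s) + ENNReal.ofReal b * (τ * B) ^ (-s) := by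
        gcongr ENNReal.ofReal a * ?_ + ENNReal.ofReal b * ?_
        · exact (ennreal_rpow_neg_le_rpow_neg_iff hs).2
            (ENNReal.mul_le_of_le_div (min_le_left _ _))
        · exact (ennreal_rpow_neg_le_rpow_neg_iff hs).2
            (ENNReal.mul_le_of_le_div (min_le_right _ _))
      _ = τ ^ (-s) * X := by
        rw [ENNReal.mul_rpow_of_ne_zero hτ hA, ENNReal.mul_rpow_of_ne_zero hτ hB]
        ring
  rw [← ENNReal.div_le_iff (by simp [ENNReal.rpow_eq_zero_iff, hX, hX'])
      (by simp [ENNReal.rpow_eq_top_iff, hX, hX']), ← ennreal_rpow_neg_le_rpow_neg_iff hs,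
    div_eq_mul_inv, ← ENNReal.rpow_neg,
    ENNReal.mul_rpow_of_ne_zero hτ (by simp [ENNReal.rpow_eq_zero_iff, hX, hX']),
    ← ENNReal.rpow_mul, neg_mul_neg, inv_mul_cancel₀ hs.ne', ENNReal.rpow_one]
  exact scaled

theorem lintegral_div_iSup_add_le {s : ℝ} (hs : 0 < s) (ha : 0 < a) (hb : 0 < b)
    {f g h : ℝ → ℝ≥0∞} (hf : Measurable f) (hg : Measurable g) (hh : Measurable h)
    (hf₀ : ⨆ x, f x ≠ 0) (hf_top : ⨆ x, f x ≠ ∞) (hg₀ : ⨆ x, g x ≠ 0) (hg_top : ⨆ x, g x ≠ ∞)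
    (H : NegPowerMeanLE s a b f g h) :
    ENNReal.ofReal a * ((∫⁻ x, f x) / ⨆ x, f x) + ENNReal.ofReal b * ((∫⁻ x, g x) / ⨆ x, g x) ≤
      (∫⁻ x, h x) *
        (ENNReal.ofReal a * (⨆ x, f x) ^ (-s) + ENNReal.ofReal b * (⨆ x, g x) ^ (-s)) ^ s⁻¹ := by
  have iSup_div_self {u : ℝ → ℝ≥0∞} (hu₀ : ⨆ x, u x ≠ 0) (hu_top : ⨆ x, u x ≠ ∞) :
      ⨆ x, u x / ⨆ x, u x = 1 := by
    rw [← ENNReal.iSup_div, ENNReal.div_self hu₀ hu_top]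
  have normalized := lintegral_add_lintegral_le_of_min_le ha hb (hf.div_const _) (hg.div_const _)
    (hh.mul_const _) ((iSup_div_self hf₀ hf_top).trans (iSup_div_self hg₀ hg_top).symm)
    (by simp [iSup_div_self hf₀ hf_top]) (H.min_div_le hs ha hf₀ hf_top hg₀ hg_top)
  simpa only [div_eq_mul_inv, lintegral_mul_const _ hf, lintegral_mul_const _ hg,
    lintegral_mul_const _ hh] using normalized

theorem rpow_neg_lintegral_le_of_iSup_ne_top {m : ℝ} (hm : 0 < m) (ha : 0 < a) (hb : 0 < b)
    {f g h : ℝ → ℝ≥0∞} (hf : Measurable f) (hg : Measurable g) (hh : Measurable h)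
    (hf_top : ⨆ x, f x ≠ ∞) (hg_top : ⨆ x, g x ≠ ∞) (H : NegPowerMeanLE (m + 1)⁻¹ a b f g h) :
    (∫⁻ x, h x) ^ (-m⁻¹) ≤
      ENNReal.ofReal a * (∫⁻ x, f x) ^ (-m⁻¹) + ENNReal.ofReal b * (∫⁻ x, g x) ^ (-m⁻¹) := by
  have ha' : ENNReal.ofReal a ≠ 0 := by simpa using ha
  have hb' : ENNReal.ofReal b ≠ 0 := by simpa using hb
  have iSup_ne_zero {u : ℝ → ℝ≥0∞} (hu : ∫⁻ x, u x ≠ 0) : ⨆ x, u x ≠ 0 := fun h₀ =>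
    hu (by simp [ENNReal.iSup_eq_zero.1 h₀])
  refine ennreal_le_rpow_neg_mean_of_ne_zero (inv_pos.2 hm) ha hb fun hF hG => ?_
  have normalized := lintegral_div_iSup_add_le (by positivity) ha hb hf hg hh (iSup_ne_zero hF)
    hf_top (iSup_ne_zero hG) hg_top H
  rw [inv_inv] at normalized
  exact ennreal_rpow_neg_le_of_div_add_le hm ha' ENNReal.ofReal_ne_top hb' ENNReal.ofReal_ne_top
    (iSup_ne_zero hF) hf_top (iSup_ne_zero hG) hg_top hF hG normalized

theorem rpow_neg_lintegral_real_le {m : ℝ} (hm : 0 < m) (ha : 0 < a) (hb : 0 < b)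
    {f g h : ℝ → ℝ≥0∞} (hf : Measurable f) (hg : Measurable g) (hh : Measurable h)
    (H : NegPowerMeanLE (m + 1)⁻¹ a b f g h) :
    (∫⁻ x, h x) ^ (-m⁻¹) ≤
      ENNReal.ofReal a * (∫⁻ x, f x) ^ (-m⁻¹) + ENNReal.ofReal b * (∫⁻ x, g x) ^ (-m⁻¹) := by
  have truncated (N : ℕ) : (∫⁻ x, h x) ^ (-m⁻¹) ≤
      ENNReal.ofReal a * (∫⁻ x, min (f x) N) ^ (-m⁻¹) +
        ENNReal.ofReal b * (∫⁻ x, min (g x) N) ^ (-m⁻¹) :=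
    rpow_neg_lintegral_le_of_iSup_ne_top hm ha hb (by fun_prop) (by fun_prop) hh
      (ne_top_of_le_ne_top (ENNReal.natCast_ne_top N) (iSup_le fun _ => min_le_right _ _))
      (ne_top_of_le_ne_top (ENNReal.natCast_ne_top N) (iSup_le fun _ => min_le_right _ _))
      (H.anti (by positivity) (fun _ => min_le_left _ _) fun _ => min_le_left _ _)
  have tendsto_truncated {c : ℝ} {u : ℝ → ℝ≥0∞} (hu : Measurable u) :
      Tendsto (fun N : ℕ => ENNReal.ofReal c * (∫⁻ x, min (u x) N) ^ (-m⁻¹)) atTop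
        (𝓝 (ENNReal.ofReal c * (∫⁻ x, u x) ^ (-m⁻¹))) := by
    refine ENNReal.Tendsto.const_mul ((ENNReal.continuous_rpow_const.tendsto _).comp ?_)
      (Or.inr ENNReal.ofReal_ne_top)
    refine lintegral_tendsto_of_tendsto_of_monotone (fun N => by fun_prop)
      (Eventually.of_forall fun x N M hNM => min_le_min le_rfl (by exact_mod_cast hNM))
      (Eventually.of_forall fun x => ?_)
    simpa using (tendsto_const_nhds (x := u x)).min ENNReal.tendsto_nat_nhds_top
  exact ge_of_tendsto' ((tendsto_truncated hf).add (tendsto_truncated hg)) truncated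

theorem lintegral_pi_succ_eq_lintegral_lintegral_cons {n : ℕ} {f : (Fin (n + 1) → ℝ) → ℝ≥0∞}
    (hf : Measurable f) :
    ∫⁻ x, f x = ∫⁻ t : ℝ, ∫⁻ w : Fin n → ℝ, f (Fin.cons t w) := by
  have preserving := (volume_preserving_piFinSuccAbove (fun _ : Fin (n + 1) => ℝ) 0).symm
  have hf_comp := (hf.comp preserving.measurable).aemeasurable (μ := volume)
  rw [← preserving.lintegral_comp hf]
  refine (lintegral_prod _ hf_comp).trans ?_
  simp [MeasurableEquiv.piFinSuccAbove, Fin.insertNthEquiv]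

theorem measurable_fin_cons {n : ℕ} :
    Measurable fun p : ℝ × (Fin n → ℝ) => (Fin.cons p.1 p.2 : Fin (n + 1) → ℝ) := by
  refine measurable_pi_lambda _ (Fin.cases ?_ fun j => ?_)
  · simpa using measurable_fst
  · simp only [Fin.cons_succ]
    fun_prop

theorem rpow_neg_lintegral_pi_le (ha : 0 < a) (hb : 0 < b) {n : ℕ} {m : ℝ} (hm : 0 < m)
    {f g h : (Fin n → ℝ) → ℝ≥0∞} (hf : Measurable f) (hg : Measurable g) (hh : Measurable h)
    (H : NegPowerMeanLE (m + n)⁻¹ a b f g h) :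
    (∫⁻ x, h x) ^ (-m⁻¹) ≤
      ENNReal.ofReal a * (∫⁻ x, f x) ^ (-m⁻¹) + ENNReal.ofReal b * (∫⁻ x, g x) ^ (-m⁻¹) := by
  induction n generalizing m with
  | zero =>
    have lintegral_eq (u : (Fin 0 → ℝ) → ℝ≥0∞) : ∫⁻ x, u x = u 0 := by
      rw [volume_pi, Measure.pi_of_empty, lintegral_dirac]
      exact congrArg u (Subsingleton.elim _ _)
    simpa [lintegral_eq] using H 0 0
  | succ n ih =>
    have slice_measurable {u : (Fin (n + 1) → ℝ) → ℝ≥0∞} (hu : Measurable u) (t : ℝ) :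
        Measurable fun w : Fin n → ℝ => u (Fin.cons t w) :=
      hu.comp (measurable_fin_cons.comp measurable_prodMk_left)
    have marginal_measurable {u : (Fin (n + 1) → ℝ) → ℝ≥0∞} (hu : Measurable u) :
        Measurable fun t : ℝ => ∫⁻ w : Fin n → ℝ, u (Fin.cons t w) :=
      (hu.comp measurable_fin_cons).lintegral_prod_right'
    simp only [lintegral_pi_succ_eq_lintegral_lintegral_cons, hf, hg, hh]
    refine rpow_neg_lintegral_real_le hm ha hb (marginal_measurable hf) (marginal_measurable hg)
      (marginal_measurable hh) fun x y => ?_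
    refine ih (by positivity) (slice_measurable hf x) (slice_measurable hg y)
      (slice_measurable hh _) fun v w => ?_
    have cons_combo : a • (Fin.cons x v : Fin (n + 1) → ℝ) + b • (Fin.cons y w) =
        Fin.cons (a • x + b • y) (a • v + b • w) := by
      ext i
      cases i using Fin.cases <;> simp
    have H_cons := H (Fin.cons x v) (Fin.cons y w)
    rw [cons_combo, Nat.cast_succ, add_comm (n : ℝ) 1, ← add_assoc] at H_cons
    exact H_cons

theorem rpow_neg_lintegral_le {E : Type*} [NormedAddCommGroup E] [NormedSpace ℝ E]
    [FiniteDimensional ℝ E] [MeasurableSpace E] [BorelSpace E] (μ : Measure E)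
    [μ.IsAddHaarMeasure] (ha : 0 < a) (hb : 0 < b) {m : ℝ} (hm : 0 < m) {f g h : E → ℝ≥0∞}
    (hf : Measurable f) (hg : Measurable g) (hh : Measurable h)
    (H : NegPowerMeanLE (m + Module.finrank ℝ E)⁻¹ a b f g h) :
    (∫⁻ x, h x ∂μ) ^ (-m⁻¹) ≤ ENNReal.ofReal a * (∫⁻ x, f x ∂μ) ^ (-m⁻¹) +
      ENNReal.ofReal b * (∫⁻ x, g x ∂μ) ^ (-m⁻¹) := by
  let L := (Module.finBasis ℝ E).equivFunL
  have measurable_symm : Measurable L.symm := L.symm.continuous.measurable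
  have haar : (μ.map L).IsAddHaarMeasure := L.isAddHaarMeasure_map μ
  obtain ⟨c, hc₀, hc⟩ : ∃ c : ℝ≥0, c ≠ 0 ∧ μ.map L = c • volume :=
    ⟨_, (Measure.addHaarScalarFactor_pos_of_isAddHaarMeasure _ _).ne',
      Measure.isAddLeftInvariant_eq_smul (μ.map L) volume⟩
  have lintegral_eq {u : E → ℝ≥0∞} (hu : Measurable u) :
      ∫⁻ x, u x ∂μ = c * ∫⁻ v, u (L.symm v) := by
    have hu_symm : Measurable fun v => u (L.symm v) := hu.comp measurable_symm
    calc ∫⁻ x, u x ∂μ = ∫⁻ v, u (L.symm v) ∂μ.map L := by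
          rw [lintegral_map hu_symm L.continuous.measurable]
          simp
      _ = c * ∫⁻ v, u (L.symm v) := by
        rw [hc, lintegral_smul_measure, ENNReal.smul_def, smul_eq_mul]
  have rpow_eq (I : ℝ≥0∞) : (c * I) ^ (-m⁻¹) = (c : ℝ≥0∞) ^ (-m⁻¹) * I ^ (-m⁻¹) := by
    rw [ENNReal.rpow_neg, ENNReal.rpow_neg, ENNReal.rpow_neg,
      ENNReal.mul_rpow_of_nonneg _ _ (by positivity), ENNReal.mul_inv] <;>
    simp [hc₀]
  have coordinates := rpow_neg_lintegral_pi_le ha hb hm (hf.comp measurable_symm)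
    (hg.comp measurable_symm) (hh.comp measurable_symm) fun v w => by
      simpa using H (L.symm v) (L.symm w)
  rw [lintegral_eq hf, lintegral_eq hg, lintegral_eq hh, rpow_eq, rpow_eq, rpow_eq,
    mul_left_comm, mul_left_comm (ENNReal.ofReal b), ← mul_add]
  gcongr
  exact coordinates

end BorellBrascampLieb

section ProjectiveInvolution

variable {E : Type*} [NormedAddCommGroup E] [NormedSpace ℝ E] {l : StrongDual ℝ E} {e p : E}

/-- The projective involution `p ↦ (p + e) / l p - e` of the half-space `{0 < l}`, for `l e = 1`.
In the coordinates `p = t • e + w` with `l w = 0` it is `(t, w) ↦ (1 / t, w / t)`. -/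
noncomputable def projInvolution (l : StrongDual ℝ E) (e p : E) : E := (l p)⁻¹ • (p + e) - e

theorem apply_projInvolution (he : l e = 1) (hp : l p ≠ 0) :
    l (projInvolution l e p) = (l p)⁻¹ := by
  simp only [projInvolution, map_sub, map_smul, map_add, he, smul_eq_mul]
  field_simp
  ring

theorem projInvolution_projInvolution (he : l e = 1) (hp : l p ≠ 0) :
    projInvolution l e (projInvolution l e p) = p := by
  rw [projInvolution, apply_projInvolution he hp, projInvolution, sub_add_cancel, inv_inv,
    smul_inv_smul₀ hp, add_sub_cancel_right]

theorem image_projInvolution_setOf_pos (he : l e = 1) :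
    projInvolution l e '' {p | 0 < l p} = {p | 0 < l p} := by
  have mapsTo : Set.MapsTo (projInvolution l e) {p | 0 < l p} {p | 0 < l p} := fun p hp => by
    simpa [apply_projInvolution he (ne_of_gt hp)] using hp
  exact mapsTo.image_subset.antisymm fun p hp =>
    ⟨_, mapsTo hp, projInvolution_projInvolution he (ne_of_gt hp)⟩

theorem injOn_projInvolution (he : l e = 1) : Set.InjOn (projInvolution l e) {p | 0 < l p} :=
  Set.LeftInvOn.injOn fun _ hp => projInvolution_projInvolution he (ne_of_gt hp)

theorem projInvolution_combo (hab : a + b = 1) {x y : E} (hx : l x ≠ 0) (hy : l y ≠ 0)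
    (hxy : l (a • x + b • y) ≠ 0) :
    projInvolution l e (a • x + b • y) =
      (a * l x / l (a • x + b • y)) • projInvolution l e x +
        (b * l y / l (a • x + b • y)) • projInvolution l e y := by
  have hl : l (a • x + b • y) = a * l x + b * l y := by simp
  rw [hl] at hxy
  simp only [projInvolution, hl]
  match_scalars <;> field_simp
  linear_combination -hab

theorem hasFDerivAt_projInvolution (hp : l p ≠ 0) :
    HasFDerivAt (projInvolution l e)
      ((l p)⁻¹ • (ContinuousLinearMap.id ℝ E - (l p)⁻¹ • l.smulRight (p + e))) p := by
  have hasFDerivAt_inv : HasFDerivAt (fun p => (l p)⁻¹) (-(l p ^ 2)⁻¹ • l) p :=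
    (hasDerivAt_inv hp).comp_hasFDerivAt p l.hasFDerivAt
  refine ((hasFDerivAt_inv.smul ((hasFDerivAt_id p).add_const e)).sub_const e).congr_fderiv ?_
  ext v
  simp only [id_eq, add_apply, smul_apply, ContinuousLinearMap.id_apply,
    ContinuousLinearMap.smulRight_apply, smul_eq_mul, sub_apply]
  module

theorem abs_det_fderiv_projInvolution [FiniteDimensional ℝ E] (he : l e = 1) (hp : 0 < l p) :
    |((l p)⁻¹ • (ContinuousLinearMap.id ℝ E - (l p)⁻¹ • l.smulRight (p + e))).det| =
      (l p)⁻¹ ^ (Module.finrank ℝ E + 1) := by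
  have eq_smul_transvection :
      (((l p)⁻¹ • (ContinuousLinearMap.id ℝ E - (l p)⁻¹ • l.smulRight (p + e)) : E →L[ℝ] E) :
        E →ₗ[ℝ] E) = (l p)⁻¹ • LinearMap.transvection (l : E →ₗ[ℝ] ℝ) (-(l p)⁻¹ • (p + e)) := by
    ext v
    simp only [ContinuousLinearMap.coe_coe, smul_apply, sub_apply, ContinuousLinearMap.id_apply,
      ContinuousLinearMap.smulRight_apply, LinearMap.smul_apply, LinearMap.transvection.apply]
    module
  have det_factor : 1 + (l : E →ₗ[ℝ] ℝ) (-(l p)⁻¹ • (p + e)) = -(l p)⁻¹ := by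
    simp only [ContinuousLinearMap.coe_coe, map_smul, map_add, smul_eq_mul, he]
    field_simp
    ring
  rw [ContinuousLinearMap.det, eq_smul_transvection, LinearMap.det_smul,
    LinearMap.transvection.det, det_factor, abs_mul, abs_neg, abs_of_pos (inv_pos.2 hp),
    abs_of_pos (by positivity), pow_succ]

variable [MeasurableSpace E] [BorelSpace E]

theorem measurable_projInvolution : Measurable (projInvolution l e) :=
  (l.measurable.inv.smul (measurable_id.add_const e)).sub_const e

variable [FiniteDimensional ℝ E]

theorem setLIntegral_pos_projInvolution (μ : Measure E) [μ.IsAddHaarMeasure] (he : l e = 1)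
    (f : E → ℝ≥0∞) :
    ∫⁻ p in {p | 0 < l p}, f p ∂μ = ∫⁻ p in {p | 0 < l p},
      ENNReal.ofReal ((l p)⁻¹ ^ (Module.finrank ℝ E + 1)) * f (projInvolution l e p) ∂μ := by
  have hpos : MeasurableSet {p | 0 < l p} := measurableSet_lt measurable_const l.measurable
  conv_lhs => rw [← image_projInvolution_setOf_pos he]
  rw [lintegral_image_eq_lintegral_abs_det_fderiv_mul μ hpos
    (fun p hp => (hasFDerivAt_projInvolution (ne_of_gt hp)).hasFDerivWithinAt)
    (injOn_projInvolution he)]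
  exact setLIntegral_congr_fun hpos fun p hp => by simp only [abs_det_fderiv_projInvolution he hp]

end ProjectiveInvolution

section HalfSpace

variable {E : Type*} [NormedAddCommGroup E] [NormedSpace ℝ E]
  {l : StrongDual ℝ E} {e p : E} {f g h : E → ℝ≥0∞}

/-- The density on the half-space `{0 < l}` (extended by zero) of the image under
`projInvolution l e` of the measure with density `f` on that half-space. -/
noncomputable def projDensity (l : StrongDual ℝ E) (e : E) (f : E → ℝ≥0∞) : E → ℝ≥0∞ :=
  Set.indicator {p | 0 < l p} fun p =>
    ENNReal.ofReal ((l p)⁻¹ ^ (Module.finrank ℝ E + 1)) * f (projInvolution l e p)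

theorem projDensity_of_pos (hp : 0 < l p) :
    projDensity l e f p =
      ENNReal.ofReal ((l p)⁻¹ ^ (Module.finrank ℝ E + 1)) * f (projInvolution l e p) :=
  Set.indicator_of_mem (s := {p | 0 < l p}) hp _

theorem pos_of_projDensity_ne_zero (hp : projDensity l e f p ≠ 0) : 0 < l p :=
  Set.mem_of_indicator_ne_zero (s := {p | 0 < l p}) hp

theorem projDensity_rpow_neg (hp : 0 < l p) :
    projDensity l e f p ^ (-(1 + Module.finrank ℝ E : ℝ)⁻¹) =
      ENNReal.ofReal (l p) * f (projInvolution l e p) ^ (-(1 + Module.finrank ℝ E : ℝ)⁻¹) := by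
  have hexp : ((Module.finrank ℝ E + 1 : ℕ) : ℝ) * (1 + Module.finrank ℝ E : ℝ)⁻¹ = 1 := by
    push_cast
    field_simp
    ring
  have weight_rpow : ENNReal.ofReal ((l p)⁻¹ ^ (Module.finrank ℝ E + 1)) ^
      (1 + Module.finrank ℝ E : ℝ)⁻¹ = (ENNReal.ofReal (l p))⁻¹ := by
    rw [ENNReal.ofReal_pow (by positivity), ← ENNReal.rpow_natCast, ← ENNReal.rpow_mul, hexp,
      ENNReal.rpow_one, ENNReal.ofReal_inv_of_pos hp]
  rw [projDensity_of_pos hp, ENNReal.rpow_neg, ENNReal.rpow_neg,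
    ENNReal.mul_rpow_of_nonneg _ _ (by positivity), weight_rpow,
    ENNReal.mul_inv (by simp) (by simp [hp]), inv_inv]

theorem NegPowerMeanLE.projDensity (ha : 0 < a) (hb : 0 < b) (hab : a + b = 1) (he : l e = 1)
    (H : ∀ p q, 0 < l p → 0 < l q → ∀ c d : ℝ, 0 < c → 0 < d → c + d = 1 →
      c * b * l p = d * a * l q → h (c • p + d • q) ^ (-(1 + Module.finrank ℝ E : ℝ)⁻¹) ≤
        ENNReal.ofReal c * f p ^ (-(1 + Module.finrank ℝ E : ℝ)⁻¹) +
          ENNReal.ofReal d * g q ^ (-(1 + Module.finrank ℝ E : ℝ)⁻¹)) :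
    NegPowerMeanLE (1 + Module.finrank ℝ E : ℝ)⁻¹ a b (projDensity l e f) (projDensity l e g)
      (projDensity l e h) := by
  intro x y
  refine ennreal_le_rpow_neg_mean_of_ne_zero (by positivity) ha hb fun hx₀ hy₀ => ?_
  have hx := pos_of_projDensity_ne_zero hx₀
  have hy := pos_of_projDensity_ne_zero hy₀
  have hz_eq : l (a • x + b • y) = a * l x + b * l y := by simp
  set z := a • x + b • y
  have hz : 0 < l z := by rw [hz_eq]; positivity
  have combo := H (projInvolution l e x) (projInvolution l e y)
    (by simpa [apply_projInvolution he hx.ne'] using hx)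
    (by simpa [apply_projInvolution he hy.ne'] using hy)
    (a * l x / l z) (b * l y / l z) (by positivity) (by positivity)
    (by rw [← add_div, ← hz_eq, div_self hz.ne'])
    (by rw [apply_projInvolution he hx.ne', apply_projInvolution he hy.ne']; field_simp)
  rw [← projInvolution_combo hab hx.ne' hy.ne' hz.ne'] at combo
  rw [projDensity_rpow_neg hx, projDensity_rpow_neg hy, projDensity_rpow_neg hz]
  refine (mul_le_mul_right combo _).trans_eq ?_
  have ofReal_mul_div {c t : ℝ} (hc : 0 < c) :
      ENNReal.ofReal (l z) * ENNReal.ofReal (c * t / l z) =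
        ENNReal.ofReal c * ENNReal.ofReal t := by
    rw [← ENNReal.ofReal_mul hz.le, mul_div_cancel₀ _ hz.ne', ENNReal.ofReal_mul hc.le]
  rw [mul_add, ← mul_assoc, ← mul_assoc, ofReal_mul_div ha, ofReal_mul_div hb, mul_assoc, mul_assoc]

variable [MeasurableSpace E] [BorelSpace E]

theorem measurable_projDensity (hf : Measurable f) : Measurable (projDensity l e f) := by
  refine Measurable.indicator (.mul ?_ (hf.comp measurable_projInvolution))
    (measurableSet_lt measurable_const l.measurable)
  exact (l.measurable.inv.pow_const _).ennreal_ofReal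

variable [FiniteDimensional ℝ E]

theorem lintegral_projDensity (μ : Measure E) [μ.IsAddHaarMeasure] (he : l e = 1)
    (f : E → ℝ≥0∞) : ∫⁻ p, projDensity l e f p ∂μ = ∫⁻ p in {p | 0 < l p}, f p ∂μ := by
  rw [projDensity, lintegral_indicator (measurableSet_lt measurable_const l.measurable),
    ← setLIntegral_pos_projInvolution μ he]

theorem inv_setLIntegral_pos_le (μ : Measure E) [μ.IsAddHaarMeasure] (ha : 0 < a) (hb : 0 < b)
    (hab : a + b = 1) (hl : l ≠ 0) (hf : Measurable f) (hg : Measurable g) (hh : Measurable h)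
    (H : ∀ p q, 0 < l p → 0 < l q → ∀ c d : ℝ, 0 < c → 0 < d → c + d = 1 →
      c * b * l p = d * a * l q → h (c • p + d • q) ^ (-(1 + Module.finrank ℝ E : ℝ)⁻¹) ≤
        ENNReal.ofReal c * f p ^ (-(1 + Module.finrank ℝ E : ℝ)⁻¹) +
          ENNReal.ofReal d * g q ^ (-(1 + Module.finrank ℝ E : ℝ)⁻¹)) :
    (∫⁻ p in {p | 0 < l p}, h p ∂μ)⁻¹ ≤
      ENNReal.ofReal a * (∫⁻ p in {p | 0 < l p}, f p ∂μ)⁻¹ +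
        ENNReal.ofReal b * (∫⁻ p in {p | 0 < l p}, g p ∂μ)⁻¹ := by
  obtain ⟨e, he⟩ : ∃ e, l e = 1 :=
    LinearMap.surjective (f := (l : E →ₗ[ℝ] ℝ)) (by exact_mod_cast hl) 1
  simpa only [lintegral_projDensity μ he, inv_one, ENNReal.rpow_neg_one] using
    rpow_neg_lintegral_le μ ha hb one_pos (measurable_projDensity hf) (measurable_projDensity hg)
      (measurable_projDensity hh) (NegPowerMeanLE.projDensity ha hb hab he H)

theorem lintegral_eq_two_mul_setLIntegral_pos (μ : Measure E) [μ.IsAddHaarMeasure] (hl : l ≠ 0)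
    (hf : f.Even) : ∫⁻ p, f p ∂μ = 2 * ∫⁻ p in {p | 0 < l p}, f p ∂μ := by
  have hpos : MeasurableSet {p | 0 < l p} := measurableSet_lt measurable_const l.measurable
  have hyperplane_null : μ {p | l p = 0} = 0 :=
    Measure.addHaar_submodule μ (LinearMap.ker (l : E →ₗ[ℝ] ℝ)) <| by
      rw [Ne, LinearMap.ker_eq_top]
      exact_mod_cast hl
  have compl_ae_eq : ({p | 0 < l p}ᶜ : Set E) =ᵐ[μ] Neg.neg ⁻¹' {p | 0 < l p} := by
    filter_upwards [measure_eq_zero_iff_ae_notMem.1 hyperplane_null] with p hp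
    have hp_iff : ¬0 < l p ↔ 0 < l (-p) := by
      rw [not_lt, map_neg, neg_pos, le_iff_lt_or_eq, or_iff_left hp]
    exact propext hp_iff
  have reflected : ∫⁻ p in Neg.neg ⁻¹' {p | 0 < l p}, f p ∂μ = ∫⁻ p in {p | 0 < l p}, f p ∂μ := by
    simpa only [hf _] using (Measure.measurePreserving_neg μ).setLIntegral_comp_preimage_emb
      (MeasurableEquiv.neg E).measurableEmbedding f {p | 0 < l p}
  rw [← lintegral_add_compl f hpos, setLIntegral_congr compl_ae_eq, reflected, two_mul]

end HalfSpace

theorem convexOn_univ_toReal {V : Type*} [AddCommGroup V] [Module ℝ V] {F : V → ℝ≥0∞}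
    (hF_top : ∀ x, F x ≠ ∞)
    (hF : ∀ x y (a b : ℝ), 0 < a → 0 < b → a + b = 1 →
      F (a • x + b • y) ≤ ENNReal.ofReal a * F x + ENNReal.ofReal b * F y) :
    ConvexOn ℝ Set.univ fun x => (F x).toReal := by
  refine convexOn_iff_forall_pos.2 ⟨convex_univ, fun x _ y _ a b ha hb hab => ?_⟩
  have hx_top := ENNReal.mul_ne_top (ENNReal.ofReal_ne_top (r := a)) (hF_top x)
  have hy_top := ENNReal.mul_ne_top (ENNReal.ofReal_ne_top (r := b)) (hF_top y)
  have toReal_le := ENNReal.toReal_mono (ENNReal.add_ne_top.2 ⟨hx_top, hy_top⟩)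
    (hF x y a b ha hb hab)
  simpa [ENNReal.toReal_add hx_top hy_top, ha.le, hb.le] using toReal_le

theorem even_indicator_one {E : Type*} [AddGroup E] {K : Set E} (hK : K = -K) :
    (K.indicator (1 : E → ℝ≥0∞)).Even := fun ξ => by
  have neg_mem_iff : -ξ ∈ K ↔ ξ ∈ K := by rw [← Set.mem_neg, ← hK]
  by_cases hξ : ξ ∈ K <;> simp [hξ, neg_mem_iff]

section NegPowerConcave

variable {E : Type*} [AddCommGroup E] [Module ℝ E] {ρ : E → ℝ≥0∞} {s : ℝ}

/-- Concavity of order `-s`: `ρ` at a convex combination is at least the power mean of order `-s`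
of its values. For `s = 1 / (n + 1)` in dimension `n` this holds for every log-concave `ρ`, in
particular for indicators of convex sets. -/
def NegPowerConcave (s : ℝ) (ρ : E → ℝ≥0∞) : Prop :=
  ∀ ⦃a b : ℝ⦄, 0 < a → 0 < b → a + b = 1 → NegPowerMeanLE s a b ρ ρ ρ

theorem negPowerConcave_indicator_of_convex {K : Set E} (hK : Convex ℝ K) (hs : 0 < s) :
    NegPowerConcave s (K.indicator 1) := by
  intro a b ha hb hab x y
  refine ennreal_le_rpow_neg_mean_of_ne_zero hs ha hb fun hx₀ hy₀ => ?_
  have hx := Set.mem_of_indicator_ne_zero hx₀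
  have hy := Set.mem_of_indicator_ne_zero hy₀
  simp [hx, hy, hK hx hy ha.le hb.le hab, ← ENNReal.ofReal_add, ha.le, hb.le, hab]

theorem NegPowerConcave.convex_support (hρ : NegPowerConcave s ρ) (hs : 0 < s) :
    Convex ℝ ρ.support := by
  have mem_support_iff (x : E) : x ∈ ρ.support ↔ ρ x ^ (-s) ≠ ∞ := by
    simp [ENNReal.rpow_eq_top_iff, hs, hs.not_gt]
  refine convex_iff_forall_pos.2 fun x hx y hy a b ha hb hab => ?_
  rw [mem_support_iff] at hx hy ⊢
  exact ne_top_of_le_ne_top (ENNReal.add_ne_top.2 ⟨ENNReal.mul_ne_top ENNReal.ofReal_ne_top hx,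
    ENNReal.mul_ne_top ENNReal.ofReal_ne_top hy⟩) (hρ ha hb hab x y)

end NegPowerConcave

section Slab

variable {E : Type*} [NormedAddCommGroup E] [NormedSpace ℝ E] {ρ : E → ℝ≥0∞} {s : ℝ}

theorem NegPowerConcave.indicator_slab_combo_le (hρ : NegPowerConcave s ρ) (hs : 0 < s)
    {φ ψ : StrongDual ℝ E} {p q : E} {c d : ℝ} (hab : a + b = 1) (hc : 0 < c) (hd : 0 < d)
    (hcd : c + d = 1) (hcombo : c * b * (φ - ψ) p = d * a * (φ - ψ) q) :
    Set.indicator {ξ | |(a • φ + b • ψ) ξ| ≤ 1} ρ (c • p + d • q) ^ (-s) ≤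
      ENNReal.ofReal c * Set.indicator {ξ | |φ ξ| ≤ 1} ρ p ^ (-s) +
        ENNReal.ofReal d * Set.indicator {ξ | |ψ ξ| ≤ 1} ρ q ^ (-s) := by
  refine ennreal_le_rpow_neg_mean_of_ne_zero hs hc hd fun hp₀ hq₀ => ?_
  have hp : |φ p| ≤ 1 := Set.mem_of_indicator_ne_zero (s := {ξ | |φ ξ| ≤ 1}) hp₀
  have hq : |ψ q| ≤ 1 := Set.mem_of_indicator_ne_zero (s := {ξ | |ψ ξ| ≤ 1}) hq₀
  have apply_combo : (a • φ + b • ψ) (c • p + d • q) = c • φ p + d • ψ q := by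
    simp only [add_apply, sub_apply, smul_apply, map_add, map_smul, smul_eq_mul] at hcombo ⊢
    linear_combination (c * φ p + d * ψ q) * hab - hcombo
  have hpq : |(a • φ + b • ψ) (c • p + d • q)| ≤ 1 := by
    rw [apply_combo]
    exact abs_le.2 (convex_Icc (-1 : ℝ) 1 (abs_le.1 hp) (abs_le.1 hq) hc.le hd.le hcd)
  rw [Set.indicator_of_mem (s := {ξ | |φ ξ| ≤ 1}) hp,
    Set.indicator_of_mem (s := {ξ | |ψ ξ| ≤ 1}) hq,
    Set.indicator_of_mem (s := {ξ | |(a • φ + b • ψ) ξ| ≤ 1}) hpq]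
  exact hρ hc hd hcd p q

variable [MeasurableSpace E]

theorem setLIntegral_slab_indicator_one {K : Set E} (hK : MeasurableSet K) (μ : Measure E)
    (φ : StrongDual ℝ E) :
    ∫⁻ ξ in {ξ | |φ ξ| ≤ 1}, K.indicator 1 ξ ∂μ = μ {ξ ∈ K | |φ ξ| ≤ 1} := by
  rw [lintegral_indicator_one hK, Measure.restrict_apply hK]
  rfl

variable [BorelSpace E]

theorem measurableSet_slab (φ : StrongDual ℝ E) : MeasurableSet {ξ | |φ ξ| ≤ 1} :=
  measurableSet_le φ.continuous.abs.measurable measurable_const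

variable [FiniteDimensional ℝ E] (μ : Measure E) [μ.IsAddHaarMeasure]

theorem zero_mem_interior_of_convex {K : Set E} (hK : Convex ℝ K) (hneg : ∀ x ∈ K, -x ∈ K)
    (hμ : μ K ≠ 0) : 0 ∈ interior K := by
  obtain ⟨x, hx⟩ : (interior K).Nonempty := by
    by_contra hempty
    have subset_frontier : K ⊆ frontier K := by
      simpa [frontier, Set.not_nonempty_iff_eq_empty.1 hempty] using subset_closure
    exact hμ (measure_mono_null subset_frontier (hK.addHaar_frontier μ))
  simpa using hK.combo_interior_self_mem_interior hx (hneg x (interior_subset hx))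
    (a := 1 / 2) (b := 1 / 2) (by norm_num) (by norm_num) (by norm_num)

theorem setLIntegral_slab_pos (hρ : Measurable ρ) (hρ_even : ρ.Even) (hs : 0 < s)
    (hρ_concave : NegPowerConcave s ρ) (hρ₀ : ∫⁻ ξ, ρ ξ ∂μ ≠ 0) (φ : StrongDual ℝ E) :
    0 < ∫⁻ ξ in {ξ | |φ ξ| ≤ 1}, ρ ξ ∂μ := by
  have zero_mem : 0 ∈ interior ρ.support :=
    zero_mem_interior_of_convex μ (hρ_concave.convex_support hs) (by simp [hρ_even _])
      ((lintegral_pos_iff_support hρ).1 hρ₀.bot_lt).ne'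
  have tendsto_abs : Tendsto (fun ξ => |φ ξ|) (𝓝 0) (𝓝 0) := by
    simpa using φ.continuous.abs.tendsto 0
  have slab_mem : {ξ | |φ ξ| ≤ 1} ∈ 𝓝 0 := tendsto_abs (Iic_mem_nhds one_pos)
  rw [setLIntegral_pos_iff hρ]
  exact Measure.measure_pos_of_mem_nhds μ
    (inter_mem (mem_interior_iff_mem_nhds.1 zero_mem) slab_mem)

theorem inv_setLIntegral_slab_eq {l : StrongDual ℝ E} (hl : l ≠ 0) (hρ_even : ρ.Even)
    (φ : StrongDual ℝ E) :
    (∫⁻ ξ in {ξ | |φ ξ| ≤ 1}, ρ ξ ∂μ)⁻¹ =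
      2⁻¹ * (∫⁻ ξ in {ξ | 0 < l ξ}, Set.indicator {ξ | |φ ξ| ≤ 1} ρ ξ ∂μ)⁻¹ := by
  have even_slab : (Set.indicator {ξ | |φ ξ| ≤ 1} ρ).Even := fun ξ => by
    simp [Set.indicator_apply, hρ_even ξ]
  rw [← lintegral_indicator (measurableSet_slab φ),
    lintegral_eq_two_mul_setLIntegral_pos μ hl even_slab, ENNReal.mul_inv (by simp) (by simp)]

theorem inv_setLIntegral_slab_combo_le (ha : 0 < a) (hb : 0 < b) (hab : a + b = 1)
    (hρ : Measurable ρ) (hρ_even : ρ.Even)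
    (hρ_concave : NegPowerConcave (1 + Module.finrank ℝ E : ℝ)⁻¹ ρ) (φ ψ : StrongDual ℝ E) :
    (∫⁻ ξ in {ξ | |(a • φ + b • ψ) ξ| ≤ 1}, ρ ξ ∂μ)⁻¹ ≤
      ENNReal.ofReal a * (∫⁻ ξ in {ξ | |φ ξ| ≤ 1}, ρ ξ ∂μ)⁻¹ +
        ENNReal.ofReal b * (∫⁻ ξ in {ξ | |ψ ξ| ≤ 1}, ρ ξ ∂μ)⁻¹ := by
  rcases eq_or_ne φ ψ with rfl | hφψ
  · rw [← add_smul, ← add_mul, ← ENNReal.ofReal_add ha.le hb.le, hab, one_smul,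
      ENNReal.ofReal_one, one_mul]
  have hl : φ - ψ ≠ 0 := sub_ne_zero.2 hφψ
  simp only [inv_setLIntegral_slab_eq μ hl hρ_even]
  rw [mul_left_comm, mul_left_comm (ENNReal.ofReal b), ← mul_add]
  gcongr
  exact inv_setLIntegral_pos_le μ ha hb hab hl (hρ.indicator (measurableSet_slab _))
    (hρ.indicator (measurableSet_slab _)) (hρ.indicator (measurableSet_slab _))
    fun p q _ _ c d hc hd hcd hcombo =>
      hρ_concave.indicator_slab_combo_le (by positivity) hab hc hd hcd hcombo

theorem stmt_7_general (hρ : Measurable ρ) (hρ_even : ρ.Even)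
    (hρ_concave : NegPowerConcave (1 + Module.finrank ℝ E : ℝ)⁻¹ ρ)
    (hρ₀ : ∫⁻ ξ, ρ ξ ∂μ ≠ 0) (hρ_top : ∫⁻ ξ, ρ ξ ∂μ ≠ ∞) :
    (∀ φ : StrongDual ℝ E,
      0 < (∫⁻ ξ in {ξ | |φ ξ| ≤ 1}, ρ ξ ∂μ).toReal / (∫⁻ ξ, ρ ξ ∂μ).toReal) ∧
    ConvexOn ℝ Set.univ fun φ : StrongDual ℝ E =>
      1 / ((∫⁻ ξ in {ξ | |φ ξ| ≤ 1}, ρ ξ ∂μ).toReal / (∫⁻ ξ, ρ ξ ∂μ).toReal) := by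
  have slab_pos (φ : StrongDual ℝ E) : 0 < ∫⁻ ξ in {ξ | |φ ξ| ≤ 1}, ρ ξ ∂μ :=
    setLIntegral_slab_pos μ hρ hρ_even (by positivity) hρ_concave hρ₀ φ
  have slab_ne_top (φ : StrongDual ℝ E) : ∫⁻ ξ in {ξ | |φ ξ| ≤ 1}, ρ ξ ∂μ ≠ ∞ :=
    ne_top_of_le_ne_top hρ_top (setLIntegral_le_lintegral _ _)
  refine ⟨fun φ => div_pos (ENNReal.toReal_pos (slab_pos φ).ne' (slab_ne_top φ))
    (ENNReal.toReal_pos hρ₀ hρ_top), ?_⟩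
  have convexOn_inv : ConvexOn ℝ Set.univ fun φ : StrongDual ℝ E =>
      ((∫⁻ ξ in {ξ | |φ ξ| ≤ 1}, ρ ξ ∂μ)⁻¹).toReal :=
    convexOn_univ_toReal (fun φ => ENNReal.inv_ne_top.2 (slab_pos φ).ne')
      fun φ ψ a b ha hb hab => inv_setLIntegral_slab_combo_le μ ha hb hab hρ hρ_even hρ_concave φ ψ
  refine (convexOn_inv.smul ENNReal.toReal_nonneg (c := (∫⁻ ξ, ρ ξ ∂μ).toReal)).congr fun φ _ => ?_
  simp [ENNReal.toReal_inv, div_eq_mul_inv]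

end Slab

end SlabMass

/-- Proposition 1(i): for `ξ` uniform on a compact convex symmetric `K` of positive volume,
the slab probability `f(x) = Vol({ξ ∈ K : |⟨ξ,x⟩| ≤ 1})/Vol(K)` is positive and `1/f` is convex. -/
theorem stmt_7 {n : ℕ} (K : Set (EuclideanSpace ℝ (Fin n)))
    (hKcomp : IsCompact K) (hKconv : Convex ℝ K) (hKsym : K = -K)
    (hvol : 0 < volume K) :
    (∀ x : EuclideanSpace ℝ (Fin n),
      0 < (volume {ξ ∈ K | |⟪ξ, x⟫_ℝ| ≤ 1}).toReal / (volume K).toReal) ∧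
    ConvexOn ℝ Set.univ (fun x : EuclideanSpace ℝ (Fin n) =>
      1 / ((volume {ξ ∈ K | |⟪ξ, x⟫_ℝ| ≤ 1}).toReal / (volume K).toReal)) := by
  have hK := hKcomp.measurableSet
  have lintegral_K : ∫⁻ ξ, K.indicator 1 ξ = volume K := lintegral_indicator_one hK
  have slab_K (x : EuclideanSpace ℝ (Fin n)) :
      ∫⁻ ξ in {ξ | |innerSL ℝ x ξ| ≤ 1}, K.indicator 1 ξ = volume {ξ ∈ K | |⟪ξ, x⟫_ℝ| ≤ 1} := by
    simp_rw [setLIntegral_slab_indicator_one hK, innerSL_apply_apply, real_inner_comm]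
  obtain ⟨pos, convexOn⟩ := stmt_7_general volume (measurable_one.indicator hK)
    (even_indicator_one hKsym) (negPowerConcave_indicator_of_convex hKconv (by positivity))
    (lintegral_K ▸ hvol.ne') (lintegral_K ▸ hKcomp.measure_lt_top.ne)
  simp only [← slab_K, ← lintegral_K]
  exact ⟨fun x => pos (innerSL ℝ x), convexOn.comp_linearMap (innerSL ℝ).toLinearMap⟩
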